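/- Any two maximal caps in AG(3,3) are affinely equivalent. -/

import Mathlib

/-- A cap in `AG(n,3)`: a finite set of points of `Fin n → ZMod 3` containing no
three distinct collinear points (three distinct points are collinear iff they sum to zero). -/
def IsCap {n : ℕ} (C : Finset (Fin n → ZMod 3)) : Prop :=
  ∀ x ∈ C, ∀ y ∈ C, ∀ z ∈ C, x ≠ y → x ≠ z → y ≠ z → x + y + z ≠ 0

/-- A maximal cap: a cap of largest possible size. -/
def MaximalCap {n : ℕ} (C : Finset (Fin n → ZMod 3)) : Prop :=
  IsCap C ∧ ∀ D : Finset (Fin n → ZMod 3), IsCap D → D.card ≤ C.card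

/-!
Every cap with at least nine points is an affine image of the elliptic paraboloid
`x₀ = x₁² + x₂²`. Coplanar caps have at most four points, and those with at least three points lie
in a parallelogram. Counting pairs of points on a common plane gives the average over all nonzero
directions of the sum of the squared sizes of the three parallel slices of the cap; since slices
have at most four points, this average is so large that some direction has slices of sizes `1`, `4`,
`4`. Take the single point as origin and the centre and diagonals of the parallelogram in one
four-point slice as coordinate frame: the lines through the origin and the parallelogram exclude
four points of the last slice, and a pigeonhole argument excludes its centre, so its four points are
forced too.
-/

open Finset

section Counting

theorem sum_card_fiber_sq {α β : Type*} [Fintype β] [DecidableEq β] (s : Finset α) (f : α → β) :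
    ∑ k, #{x ∈ s | f x = k} ^ 2 = #{q ∈ s ×ˢ s | f q.1 = f q.2} := by
  rw [card_eq_sum_card_fiberwise (f := fun q ↦ f q.1) (t := univ) fun _ _ ↦ by simp]
  refine sum_congr rfl fun k _ ↦ ?_
  rw [sq, ← card_product]
  congr 1
  ext q
  simp only [mem_product, mem_filter]
  grind

variable {K ι : Type*} [Field K] [Fintype K] [DecidableEq K] [Fintype ι]

theorem card_mul_card_dotProduct_eq_zero [DecidableEq ι] {v : ι → K} (hv : v ≠ 0) :
    Fintype.card K * #{w : ι → K | w ⬝ᵥ v = 0} = Fintype.card K ^ Fintype.card ι := by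
  let f : (ι → K) →ₗ[K] K := (dotProductBilin K K).flip v
  have hf : Function.Surjective f := by
    refine LinearMap.surjective fun h ↦ hv (dotProduct_eq_zero v fun w ↦ ?_)
    rw [dotProduct_comm]
    exact LinearMap.congr_fun h w
  have fiber_card (k : K) : #{w | f w = k} = #{w | f w = 0} :=
    AddMonoidHom.card_fiber_eq_of_mem_range f (hf k) (hf 0)
  calc Fintype.card K * #{w | f w = 0} = ∑ k, #{w | f w = k} := by simp [fiber_card]
    _ = #(univ : Finset (ι → K)) := (card_eq_sum_card_fiberwise fun _ _ ↦ by simp).symm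
    _ = Fintype.card K ^ Fintype.card ι := by simp

theorem card_mul_sum_sq_card_slice [DecidableEq ι] (C : Finset (ι → K)) :
    Fintype.card K * ∑ w : ι → K, ∑ k, #{x ∈ C | w ⬝ᵥ x = k} ^ 2 =
      Fintype.card K ^ Fintype.card ι * (Fintype.card K * #C + #C.offDiag) := by
  have pair_count (q : (ι → K) × (ι → K)) :
      #{w : ι → K | w ⬝ᵥ q.1 = w ⬝ᵥ q.2} = #{w : ι → K | w ⬝ᵥ (q.1 - q.2) = 0} := by
    simp only [dotProduct_sub, sub_eq_zero]
  have diag_sum : ∑ q ∈ C.diag, Fintype.card K * #{w : ι → K | w ⬝ᵥ q.1 = w ⬝ᵥ q.2} =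
      #C * (Fintype.card K * Fintype.card K ^ Fintype.card ι) := by
    rw [sum_const_nat (m := Fintype.card K * Fintype.card K ^ Fintype.card ι), diag_card]
    intro q hq
    simp [(mem_diag.1 hq).2]
  have offDiag_sum : ∑ q ∈ C.offDiag, Fintype.card K * #{w : ι → K | w ⬝ᵥ q.1 = w ⬝ᵥ q.2} =
      #C.offDiag * Fintype.card K ^ Fintype.card ι := by
    refine sum_const_nat fun q hq ↦ ?_
    rw [pair_count, card_mul_card_dotProduct_eq_zero (sub_ne_zero.2 (mem_offDiag.1 hq).2.2)]
  calc Fintype.card K * ∑ w : ι → K, ∑ k, #{x ∈ C | w ⬝ᵥ x = k} ^ 2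
      = Fintype.card K * ∑ q ∈ C ×ˢ C, #{w : ι → K | w ⬝ᵥ q.1 = w ⬝ᵥ q.2} := by
        simp only [sum_card_fiber_sq]
        congr 1
        exact sum_card_bipartiteAbove_eq_sum_card_bipartiteBelow
          fun w (q : (ι → K) × (ι → K)) ↦ w ⬝ᵥ q.1 = w ⬝ᵥ q.2
    _ = Fintype.card K ^ Fintype.card ι * (Fintype.card K * #C + #C.offDiag) := by
        rw [mul_sum, ← diag_union_offDiag, sum_union (disjoint_diag_offDiag C), diag_sum,
          offDiag_sum]
        ring

theorem exists_le_sum_sq_card_slice [Nonempty ι] (C : Finset (ι → K)) :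
    ∃ w : ι → K, w ≠ 0 ∧
      Fintype.card K ^ Fintype.card ι * (Fintype.card K * #C + #C.offDiag) ≤
        Fintype.card K * (#C ^ 2 +
          (Fintype.card K ^ Fintype.card ι - 1) * ∑ k, #{x ∈ C | w ⬝ᵥ x = k} ^ 2) := by
  classical
  let energy (w : ι → K) : ℕ := ∑ k, #{x ∈ C | w ⬝ᵥ x = k} ^ 2
  obtain ⟨w, hw, hmax⟩ := exists_max_image (univ.erase (0 : ι → K)) energy
    univ_nontrivial.erase_nonempty
  have energy_zero : energy 0 = #C ^ 2 := by
    simpa [energy, sq] using sum_card_fiber_sq C (0 ⬝ᵥ ·)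
  refine ⟨w, ne_of_mem_erase hw, ?_⟩
  rw [← card_mul_sum_sq_card_slice]
  refine Nat.mul_le_mul_left _ ?_
  calc ∑ w, energy w = energy 0 + ∑ w ∈ univ.erase 0, energy w :=
        (add_sum_erase _ _ (mem_univ 0)).symm
    _ ≤ #C ^ 2 + #(univ.erase (0 : ι → K)) • energy w :=
        add_le_add energy_zero.le (sum_le_card_nsmul _ _ _ hmax)
    _ = #C ^ 2 + (Fintype.card K ^ Fintype.card ι - 1) * energy w := by simp

end Counting

section Frame

variable {K V : Type*} [Ring K] [AddCommGroup V] [Module K V]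

variable (K) in
/-- The affine coordinate system with origin `p` and basis vectors `b`: it sends the coordinate
vector `x` to the point `p + ∑ i, x i • b i`. The vectors `b` may be dependent. -/
def affineFrame {m : ℕ} (p : V) (b : Fin m → V) : (Fin m → K) →ᵃ[K] V :=
  (Fintype.linearCombination K b).toAffineMap + AffineMap.const K _ p

variable (K) in
theorem affineFrame_apply {m : ℕ} (p : V) (b : Fin m → V) (x : Fin m → K) :
    affineFrame K p b x = ∑ i, x i • b i + p := by
  simp [affineFrame, Fintype.linearCombination_apply]

theorem affineFrame_injective {m : ℕ} (p : V) {b : Fin m → V} (hb : LinearIndependent K b) :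
    Function.Injective (affineFrame K p b) := fun x y hxy ↦ by
  simp only [affineFrame_apply, add_left_inj] at hxy
  exact hb.fintypeLinearCombination_injective hxy

theorem subset_range_affineFrame_of_coplanar {K V : Type*} [DivisionRing K] [AddCommGroup V]
    [Module K V] [FiniteDimensional K V] {s : Set V}
    (hs : Coplanar K s) {p u v : V} (hp : p ∈ s) (hu : p + u ∈ s) (hv : p + v ∈ s)
    (huv : LinearIndependent K ![u, v]) :
    s ⊆ Set.range (affineFrame K p ![u, v]) := by
  have span_le : Submodule.span K (Set.range ![u, v]) ≤ vectorSpan K s := by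
    rw [Submodule.span_le, Set.range_subset_iff, Fin.forall_fin_two]
    exact ⟨by simpa using vsub_mem_vectorSpan K hu hp, by simpa using vsub_mem_vectorSpan K hv hp⟩
  have span_eq : Submodule.span K (Set.range ![u, v]) = vectorSpan K s :=
    Submodule.eq_of_le_of_finrank_le span_le <| by
      simpa [finrank_span_eq_card huv] using hs.finrank_le_two
  intro x hx
  have hxp : x - p ∈ Submodule.span K (Set.range ![u, v]) :=
    span_eq ▸ vsub_mem_vectorSpan K hx hp
  obtain ⟨y, hy⟩ := (Fintype.range_linearCombination K ![u, v]).symm ▸ hxp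
  exact ⟨y, by simp [affineFrame, hy]⟩

theorem coplanar_setOf_dotProduct_eq {K : Type*} [Field K] {w : Fin 3 → K} (hw : w ≠ 0) (k : K) :
    Coplanar K {x | w ⬝ᵥ x = k} := by
  let φ : Module.Dual K (Fin 3 → K) := dotProductBilin K K w
  have hφ : φ ≠ 0 := fun h ↦ hw (dotProduct_eq_zero w (LinearMap.congr_fun h))
  have finrank_ker : Module.finrank K φ.ker + 1 = 3 := by
    simpa using Module.Dual.finrank_ker_add_one_of_ne_zero hφ
  have vectorSpan_le : vectorSpan K {x | w ⬝ᵥ x = k} ≤ φ.ker := by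
    rw [vectorSpan_def, Submodule.span_le]
    rintro _ ⟨x, hx, y, hy, rfl⟩
    change w ⬝ᵥ (x - y) = 0
    rw [dotProduct_sub, hx, hy, sub_self]
  rw [coplanar_iff_finrank_le_two]
  have := Submodule.finrank_mono vectorSpan_le
  omega

end Frame

section Parallelogram

variable {V : Type*} [AddCommGroup V] [DecidableEq V]

/-- The vertices of the parallelogram with centre `c` whose diagonals are `c ± a` and `c ± b`;
degenerate choices of `a` and `b` are allowed. -/
def parallelogram (c a b : V) : Finset V := {c + a, c - a, c + b, c - b}

theorem card_parallelogram_le (c a b : V) : #(parallelogram c a b) ≤ 4 := card_le_four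

theorem image_parallelogram {K W : Type*} [Ring K] [Module K V] [AddCommGroup W] [Module K W]
    [DecidableEq W] (f : V →ᵃ[K] W) (c a b : V) :
    (parallelogram c a b).image f = parallelogram (f c) (f.linear a) (f.linear b) := by
  have map_add (x : V) : f (c + x) = f c + f.linear x := by
    simpa [add_comm] using f.map_vadd c x
  have map_sub (x : V) : f (c - x) = f c - f.linear x := by
    simpa [sub_eq_add_neg] using map_add (-x)
  simp only [parallelogram, image_insert, image_singleton, map_add, map_sub]

theorem forall_zmod_three {P : ZMod 3 → Prop} : (∀ s, P s) ↔ P 0 ∧ P 1 ∧ P (-1) :=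
  ⟨fun h ↦ ⟨h 0, h 1, h (-1)⟩, fun ⟨h₀, h₁, h₂⟩ s ↦ by fin_cases s <;> assumption⟩

theorem linearIndependent_of_card_parallelogram [Module (ZMod 3) V] {c a b : V}
    (h : #(parallelogram c a b) = 4) : LinearIndependent (ZMod 3) ![a, b] := by
  have not_eq_triple {x y z : V} (heq : parallelogram c a b = {x, y, z}) : False := by
    have := card_le_three (a := x) (b := y) (c := z)
    rw [← heq, h] at this
    omega
  have ha : a ≠ 0 := fun ha ↦ not_eq_triple (x := c) (y := c + b) (z := c - b) <| by
    simp [parallelogram, ha]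
  rw [LinearIndependent.pair_iff' ha, forall_zmod_three]
  refine ⟨fun hb ↦ not_eq_triple (x := c + a) (y := c - a) (z := c) ?_,
    fun hb ↦ not_eq_triple (x := c + a) (y := c - a) (z := c - a) ?_,
    fun hb ↦ not_eq_triple (x := c + a) (y := c - a) (z := c + a) ?_⟩
  all_goals
    ext x
    simp only [parallelogram, ← hb, mem_insert, mem_singleton, zero_smul, one_smul, neg_smul,
      add_zero, sub_zero, sub_neg_eq_add, ← sub_eq_add_neg]
    tauto

end Parallelogram

namespace IsCap

variable {m n : ℕ}

theorem neg_add_notMem {C : Finset (Fin n → ZMod 3)} (hC : IsCap C) {x y : Fin n → ZMod 3}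
    (hx : x ∈ C) (hy : y ∈ C) (hxy : x ≠ y) : -(x + y) ∉ C := by
  have left_ne {x y : Fin n → ZMod 3} (hxy : x ≠ y) : x ≠ -(x + y) := fun h ↦ by
    have coord : ∀ s t : ZMod 3, s = -(s + t) → s = t := by decide
    exact hxy (funext fun i ↦ coord _ _ (congrFun h i))
  exact fun hz ↦ hC x hx y hy _ hz hxy (left_ne hxy) (add_comm x y ▸ left_ne hxy.symm)
    (add_neg_cancel _)

theorem mono {C D : Finset (Fin n → ZMod 3)} (hC : IsCap C) (hDC : D ⊆ C) : IsCap D :=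
  fun x hx y hy z hz ↦ hC x (hDC hx) y (hDC hy) z (hDC hz)

theorem preimage {C : Finset (Fin n → ZMod 3)} (hC : IsCap C)
    (f : (Fin m → ZMod 3) →ᵃ[ZMod 3] (Fin n → ZMod 3)) (hf : Function.Injective f) :
    IsCap (C.preimage f hf.injOn) := by
  intro x hx y hy z hz hxy hxz hyz hsum
  rw [mem_preimage] at hx hy hz
  refine hC _ hx _ hy _ hz (hf.ne hxy) (hf.ne hxz) (hf.ne hyz) ?_
  have map_eq (v : Fin m → ZMod 3) : f v = f.linear v + f 0 := congrFun f.decomp v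
  have three_smul : (3 : ZMod 3) • f 0 = 0 := zero_smul _ _
  calc f x + f y + f z = f.linear (x + y + z) + (3 : ZMod 3) • f 0 := by
        rw [map_eq x, map_eq y, map_eq z, map_add, map_add]; module
    _ = 0 := by rw [hsum, map_zero, three_smul, add_zero]

theorem linearIndependent_sub {C : Finset (Fin n → ZMod 3)} (hC : IsCap C)
    {p q r : Fin n → ZMod 3} (hp : p ∈ C) (hq : q ∈ C) (hr : r ∈ C) (hpq : p ≠ q) (hpr : p ≠ r)
    (hqr : q ≠ r) : LinearIndependent (ZMod 3) ![q - p, r - p] := by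
  rw [LinearIndependent.pair_iff' (sub_ne_zero.2 hpq.symm), forall_zmod_three]
  refine ⟨?_, ?_, fun h ↦ hC.neg_add_notMem hp hq hpq ?_⟩
  · simpa using (sub_ne_zero.2 hpr.symm).symm
  · simpa using hqr
  · have three_smul : (3 : ZMod 3) • p = 0 := zero_smul _ _
    have neg_add_eq : -(p + q) = r := by linear_combination (norm := module) h - three_smul
    rwa [neg_add_eq]

/-- The third points of the three lines through two of `0`, `e₁`, `e₂` are excluded, and any two
of the points `e₁ + e₂`, `e₁ - e₂`, `e₂ - e₁` are collinear with one of `0`, `e₁`, `e₂`. -/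
theorem exists_subset_parallelogram_of_frame {S : Finset (Fin 2 → ZMod 3)} (hS : IsCap S)
    (h₀ : 0 ∈ S) (h₁ : ![1, 0] ∈ S) (h₂ : ![0, 1] ∈ S) :
    ∃ c a b, S ⊆ parallelogram c a b := by
  have h₀₁ := hS.neg_add_notMem h₀ h₁ (by decide)
  have h₀₂ := hS.neg_add_notMem h₀ h₂ (by decide)
  have h₁₂ := hS.neg_add_notMem h₁ h₂ (by decide)
  by_cases hsum : ![1, 1] ∈ S
  · have h₁sum := hS.neg_add_notMem h₁ hsum (by decide)
    have h₂sum := hS.neg_add_notMem h₂ hsum (by decide)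
    have cover : ∀ x : Fin 2 → ZMod 3, x ∈ parallelogram ![-1, -1] ![1, 1] ![1, -1] ∨
        x = -(0 + ![1, 0]) ∨ x = -(0 + ![0, 1]) ∨ x = -(![1, 0] + ![0, 1]) ∨
        x = -(![1, 0] + ![1, 1]) ∨ x = -(![0, 1] + ![1, 1]) := by decide
    refine ⟨![-1, -1], ![1, 1], ![1, -1], fun x hx ↦ ?_⟩
    obtain h | rfl | rfl | rfl | rfl | rfl := cover x
    exacts [h, absurd hx h₀₁, absurd hx h₀₂, absurd hx h₁₂, absurd hx h₁sum, absurd hx h₂sum]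
  by_cases hdiff : ![1, -1] ∈ S
  · have h₀diff := hS.neg_add_notMem h₀ hdiff (by decide)
    have cover : ∀ x : Fin 2 → ZMod 3, x ∈ parallelogram ![-1, 0] ![1, 0] ![1, 1] ∨
        x = -(0 + ![1, 0]) ∨ x = -(0 + ![0, 1]) ∨ x = -(![1, 0] + ![0, 1]) ∨
        x = ![1, 1] ∨ x = -(0 + ![1, -1]) := by decide
    refine ⟨![-1, 0], ![1, 0], ![1, 1], fun x hx ↦ ?_⟩
    obtain h | rfl | rfl | rfl | rfl | rfl := cover x
    exacts [h, absurd hx h₀₁, absurd hx h₀₂, absurd hx h₁₂, absurd hx hsum, absurd hx h₀diff]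
  · have cover : ∀ x : Fin 2 → ZMod 3, x ∈ parallelogram ![0, -1] ![0, 1] ![1, 1] ∨
        x = -(0 + ![1, 0]) ∨ x = -(0 + ![0, 1]) ∨ x = -(![1, 0] + ![0, 1]) ∨
        x = ![1, 1] ∨ x = ![1, -1] := by decide
    refine ⟨![0, -1], ![0, 1], ![1, 1], fun x hx ↦ ?_⟩
    obtain h | rfl | rfl | rfl | rfl | rfl := cover x
    exacts [h, absurd hx h₀₁, absurd hx h₀₂, absurd hx h₁₂, absurd hx hsum, absurd hx hdiff]

theorem exists_subset_parallelogram {S : Finset (Fin n → ZMod 3)} (hS : IsCap S)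
    (hcop : Coplanar (ZMod 3) (S : Set (Fin n → ZMod 3))) (hcard : 2 < #S) :
    ∃ c a b, S ⊆ parallelogram c a b := by
  obtain ⟨p, hp, q, hq, r, hr, hpq, hpr, hqr⟩ := two_lt_card.1 hcard
  have hli := hS.linearIndependent_sub hp hq hr hpq hpr hqr
  let f := affineFrame (ZMod 3) p ![q - p, r - p]
  have hf : Function.Injective f := affineFrame_injective p hli
  have apply_eq (x : Fin 2 → ZMod 3) : f x = x 0 • (q - p) + x 1 • (r - p) + p := by
    simp [f, affineFrame_apply]
  obtain ⟨c, a, b, hsub⟩ := (hS.preimage f hf).exists_subset_parallelogram_of_frame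
    (by simpa [apply_eq] using hp) (by simpa [apply_eq] using hq) (by simpa [apply_eq] using hr)
  refine ⟨f c, f.linear a, f.linear b, fun x hx ↦ ?_⟩
  obtain ⟨y, rfl⟩ : x ∈ Set.range f :=
    subset_range_affineFrame_of_coplanar hcop (mem_coe.2 hp) (by simpa using hq)
      (by simpa using hr) hli hx
  rw [← image_parallelogram]
  exact mem_image_of_mem f (hsub (mem_preimage.2 hx))

theorem card_le_four_of_coplanar {S : Finset (Fin n → ZMod 3)} (hS : IsCap S)
    (hcop : Coplanar (ZMod 3) (S : Set (Fin n → ZMod 3))) : #S ≤ 4 := by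
  by_contra! h
  obtain ⟨c, a, b, hsub⟩ := hS.exists_subset_parallelogram hcop (by omega)
  exact h.not_ge ((card_le_card hsub).trans (card_parallelogram_le c a b))

end IsCap

/-- In terms of the deficits `d k = 4 - n k`, with sum `D ≤ 3`, the hypothesis `hsq` reads
`4 * D ^ 2 - D + 60 ≤ 13 * ∑ k, d k ^ 2`, and so forces some deficit to be `3`. -/
theorem exists_eq_one_of_le_sum_sq {n : ZMod 3 → ℕ} (hn : ∀ k, n k ≤ 4) (hsum : 9 ≤ ∑ k, n k)
    (hsq : 4 * (∑ k, n k) ^ 2 + 9 * ∑ k, n k ≤ 13 * ∑ k, n k ^ 2) :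
    ∃ k, n k = 1 ∧ ∀ j ≠ k, n j = 4 := by
  have triples {a b c : ℕ} (ha : a ≤ 4) (hb : b ≤ 4) (hc : c ≤ 4) (hsum : 9 ≤ a + b + c)
      (hsq : 4 * (a + b + c) ^ 2 + 9 * (a + b + c) ≤ 13 * (a ^ 2 + b ^ 2 + c ^ 2)) :
      (a = 1 ∧ b = 4 ∧ c = 4) ∨ (a = 4 ∧ b = 1 ∧ c = 4) ∨ (a = 4 ∧ b = 4 ∧ c = 1) := by
    interval_cases a <;> interval_cases b <;> interval_cases c <;> omega
  have sum_eq (f : ZMod 3 → ℕ) : ∑ k, f k = f 0 + f 1 + f (-1) := Fin.sum_univ_three f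
  rw [sum_eq] at hsum hsq
  rw [sum_eq] at hsq
  obtain ⟨h₀, h₁, h₂⟩ | ⟨h₀, h₁, h₂⟩ | ⟨h₀, h₁, h₂⟩ :=
    triples (hn 0) (hn 1) (hn (-1)) hsum hsq
  · exact ⟨0, h₀, by simp +contextual [forall_zmod_three, h₀, h₁, h₂]⟩
  · exact ⟨1, h₁, by simp +contextual [forall_zmod_three, h₀, h₁, h₂]⟩
  · exact ⟨-1, h₂, by simp +contextual [forall_zmod_three, h₀, h₁, h₂]⟩

theorem IsCap.exists_card_slice_eq_one {C : Finset (Fin 3 → ZMod 3)} (hC : IsCap C)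
    (hcard : 9 ≤ #C) :
    ∃ w : Fin 3 → ZMod 3, w ≠ 0 ∧ ∃ k, #{x ∈ C | w ⬝ᵥ x = k} = 1 ∧
      ∀ j ≠ k, #{x ∈ C | w ⬝ᵥ x = j} = 4 := by
  obtain ⟨w, hw, hsq⟩ := exists_le_sum_sq_card_slice C
  have card_eq : ∑ k, #{x ∈ C | w ⬝ᵥ x = k} = #C :=
    (card_eq_sum_card_fiberwise fun _ _ ↦ by simp).symm
  refine ⟨w, hw, exists_eq_one_of_le_sum_sq (fun k ↦ ?_) (card_eq ▸ hcard) ?_⟩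
  · exact (hC.mono (filter_subset _ C)).card_le_four_of_coplanar
      ((coplanar_setOf_dotProduct_eq hw k).subset fun x hx ↦ (mem_filter.1 hx).2)
  · have offDiag_card_add : #C.offDiag + #C = #C ^ 2 := by
      rw [offDiag_card, sq, Nat.sub_add_cancel (Nat.le_mul_self _)]
    rw [card_eq]
    simp only [ZMod.card, Fintype.card_fin] at hsq
    omega

/-- The elliptic paraboloid `x₀ = x₁² + x₂²` in `AG(3,3)`, the model to which every `9`-point cap
is affinely equivalent. It is elliptic because `-1` is not a square modulo `3`. -/
def paraboloid : Finset (Fin 3 → ZMod 3) := {x | x 0 = x 1 ^ 2 + x 2 ^ 2}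

theorem card_paraboloid : #paraboloid = 9 := by decide

theorem isCap_paraboloid : IsCap paraboloid := by
  intro x hx y hy z hz hxy _ _ hsum
  simp only [paraboloid, mem_filter_univ] at hx hy hz
  have eq_neg (i : Fin 3) : z i = -(x i + y i) :=
    (neg_eq_of_add_eq_zero_right (congrFun hsum i)).symm
  have three_eq : (3 : ZMod 3) = 0 := rfl
  have sq_add_sq : (x 1 - y 1) ^ 2 + (x 2 - y 2) ^ 2 = 0 := by
    rw [eq_neg 0, eq_neg 1, eq_neg 2] at hz
    linear_combination hx + hy + hz + (x 1 ^ 2 + y 1 ^ 2 + x 2 ^ 2 + y 2 ^ 2) * three_eq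
  have anisotropic : ∀ s t : ZMod 3, s ^ 2 + t ^ 2 = 0 → s = 0 ∧ t = 0 := by decide
  obtain ⟨h₁, h₂⟩ := anisotropic _ _ sq_add_sq
  rw [sub_eq_zero] at h₁ h₂
  have h₀ : x 0 = y 0 := by rw [hx, hy, h₁, h₂]
  exact hxy (funext (Fin.forall_fin_succ.2 ⟨h₀, Fin.forall_fin_two.2 ⟨h₁, h₂⟩⟩))

/-- A set in the position, relative to the first coordinate, to which an affine map brings a cap
having a direction with slices of sizes `1`, `4`, `4`: the single point is the origin, the centre of
the parallelogram forming the next slice is `e₀`, and its diagonals have directions `e₁`, `e₂`. -/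
structure InNormalPosition (D : Finset (Fin 3 → ZMod 3)) : Prop where
  slice_zero : {x ∈ D | x 0 = 0} = {0}
  slice_one : {x ∈ D | x 0 = 1} = parallelogram ![1, 0, 0] ![0, 1, 0] ![0, 0, 1]
  card_slice_neg_one : #{x ∈ D | x 0 = -1} = 4

namespace InNormalPosition

variable {D : Finset (Fin 3 → ZMod 3)}

theorem slice_neg_one_subset (hpos : InNormalPosition D) (hD : IsCap D) :
    {x ∈ D | x 0 = -1} ⊆ insert ![-1, 0, 0] {x ∈ paraboloid | x 0 = -1} := by
  intro x hx
  obtain ⟨hxD, hx₀⟩ := mem_filter.1 hx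
  have zero_mem : 0 ∈ D := filter_subset _ _ (hpos.slice_zero.superset (mem_singleton_self 0))
  have cover : ∀ x : Fin 3 → ZMod 3, x 0 = -1 →
      x ∈ insert ![-1, 0, 0] ({x ∈ paraboloid | x 0 = -1} : Finset _) ∨
      ∃ y ∈ parallelogram ![1, 0, 0] ![0, 1, 0] ![0, 0, 1], x = -(0 + y) := by decide
  refine (cover x hx₀).resolve_right ?_
  rintro ⟨y, hy, rfl⟩
  obtain ⟨hyD, hy₀⟩ := mem_filter.1 (hpos.slice_one.superset hy)
  have zero_ne : 0 ≠ y := by rintro rfl; exact absurd hy₀ (by decide)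
  exact hD.neg_add_notMem zero_mem hyD zero_ne hxD

/-- Otherwise `v ↦ v 1 * v 2` would embed the four points of the slice `x 0 = -1` into `ZMod 3`:
two of them with equal products are antipodal around `![-1, 0, 0]`, hence collinear with it. -/
theorem neg_vertex_notMem (hpos : InNormalPosition D) (hD : IsCap D) : ![-1, 0, 0] ∉ D := by
  intro vertex_mem
  have antipodal : ∀ v ∈ insert ![-1, 0, 0] ({x ∈ paraboloid | x 0 = -1} : Finset _),
      ∀ w ∈ insert ![-1, 0, 0] ({x ∈ paraboloid | x 0 = -1} : Finset _),
      v 1 * v 2 = w 1 * w 2 → v = w ∨ -(v + w) = ![-1, 0, 0] := by decide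
  have mul_injOn : Set.InjOn (fun v : Fin 3 → ZMod 3 ↦ v 1 * v 2) {x ∈ D | x 0 = -1} := by
    intro v hv w hw hvw
    by_contra hne
    have neg_add_eq := (antipodal v (hpos.slice_neg_one_subset hD (mem_filter.2 hv)) w
      (hpos.slice_neg_one_subset hD (mem_filter.2 hw)) hvw).resolve_left hne
    exact hD.neg_add_notMem hv.1 hw.1 hne (neg_add_eq ▸ vertex_mem)
  have card_le := card_le_card_of_injOn (s := {x ∈ D | x 0 = -1}) (t := univ) _ (by simp)
    (by simpa using mul_injOn)
  rw [hpos.card_slice_neg_one, card_univ, ZMod.card] at card_le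
  omega

theorem subset_paraboloid (hpos : InNormalPosition D) (hD : IsCap D) : D ⊆ paraboloid := by
  intro x hx
  have trichotomy : ∀ s : ZMod 3, s = 0 ∨ s = 1 ∨ s = -1 := by decide
  obtain h | h | h := trichotomy (x 0)
  · rw [mem_singleton.1 (hpos.slice_zero.subset (mem_filter.2 ⟨hx, h⟩))]
    decide
  · have parallelogram_subset :
        parallelogram ![1, 0, 0] ![0, 1, 0] ![0, 0, 1] ⊆ paraboloid := by decide
    exact parallelogram_subset (hpos.slice_one.subset (mem_filter.2 ⟨hx, h⟩))
  · obtain rfl | hx' := mem_insert.1 (hpos.slice_neg_one_subset hD (mem_filter.2 ⟨hx, h⟩))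
    · exact absurd hx (hpos.neg_vertex_notMem hD)
    · exact (mem_filter.1 hx').1

end InNormalPosition

theorem linearIndependent_finCons_of_dual {K V : Type*} [Field K] [AddCommGroup V] [Module K V]
    {m : ℕ} {v : V} {b : Fin m → V} (hb : LinearIndependent K b) {φ : Module.Dual K V}
    (hv : φ v ≠ 0) (hφb : ∀ i, φ (b i) = 0) :
    LinearIndependent K (Fin.cons v b : Fin (m + 1) → V) := by
  refine linearIndependent_finCons.2 ⟨hb, fun hmem ↦ hv ?_⟩
  have span_le : Submodule.span K (Set.range b) ≤ φ.ker :=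
    Submodule.span_le.2 (Set.range_subset_iff.2 hφb)
  exact span_le hmem

theorem eq_of_forall_mem_parallelogram {K V : Type*} [Field K] [AddCommGroup V] [Module K V]
    [DecidableEq V] (htwo : (2 : K) ≠ 0) {φ : Module.Dual K V} {c a b : V} {k : K}
    (h : ∀ x ∈ parallelogram c a b, φ x = k) : φ c = k ∧ φ a = 0 ∧ φ b = 0 := by
  have midpoint {s t : K} (hadd : s + t = k) (hsub : s - t = k) : s = k ∧ t = 0 := by
    have two_mul_eq : 2 * t = 0 := by linear_combination hadd - hsub
    have t_eq := (mul_eq_zero.1 two_mul_eq).resolve_left htwo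
    exact ⟨by rwa [t_eq, add_zero] at hadd, t_eq⟩
  simp only [parallelogram, forall_mem_insert, mem_singleton, forall_eq, map_add, map_sub] at h
  obtain ⟨h₁, h₂, h₃, h₄⟩ := h
  exact ⟨(midpoint h₁ h₂).1, (midpoint h₁ h₂).2, (midpoint h₃ h₄).2⟩

theorem inNormalPosition_preimage {C : Finset (Fin 3 → ZMod 3)}
    {φ : Module.Dual (ZMod 3) (Fin 3 → ZMod 3)} {k : ZMod 3} {p c a b : Fin 3 → ZMod 3}
    (hp : {x ∈ C | φ x = k} = {p}) (hparallelogram : {x ∈ C | φ x = k + 1} = parallelogram c a b)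
    (hcard : #{x ∈ C | φ x = k - 1} = 4)
    (F : (Fin 3 → ZMod 3) ≃ᵃ[ZMod 3] (Fin 3 → ZMod 3))
    (hF : ∀ x, F x = x 0 • (c - p) + x 1 • a + x 2 • b + p)
    (hφ : ∀ x, φ (F x) = x 0 + k) :
    InNormalPosition (C.preimage F F.injective.injOn) := by
  have mem_slice (s : ZMod 3) (x : Fin 3 → ZMod 3) :
      x ∈ {x ∈ C.preimage F F.injective.injOn | x 0 = s} ↔ F x ∈ {x ∈ C | φ x = k + s} := by
    simp [hφ, add_comm]
  have linear_apply (x : Fin 3 → ZMod 3) : F.linear x = x 0 • (c - p) + x 1 • a + x 2 • b := by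
    have := congrFun F.toAffineMap.decomp x
    simpa [hF] using this.symm
  refine ⟨?_, ?_, ?_⟩
  · have F_zero : F 0 = p := by simp [hF]
    ext x
    rw [mem_slice, add_zero, hp, mem_singleton, mem_singleton, ← F_zero, F.injective.eq_iff]
  · have image_eq :
        (parallelogram ![1, 0, 0] ![0, 1, 0] ![0, 0, 1]).image F = parallelogram c a b := by
      have := image_parallelogram F.toAffineMap ![1, 0, 0] ![0, 1, 0] ![0, 0, 1]
      simpa [hF, linear_apply] using this
    ext x
    rw [mem_slice, hparallelogram, ← image_eq, F.injective.mem_finset_image]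
  · rw [← hcard, sub_eq_add_neg]
    exact card_equiv F.toEquiv (mem_slice (-1))

theorem IsCap.exists_affineEquiv_inNormalPosition {C : Finset (Fin 3 → ZMod 3)} (hC : IsCap C)
    (hcard : 9 ≤ #C) :
    ∃ F : (Fin 3 → ZMod 3) ≃ᵃ[ZMod 3] (Fin 3 → ZMod 3),
      InNormalPosition (C.preimage F F.injective.injOn) := by
  obtain ⟨w, hw, k, card_one, card_four⟩ := hC.exists_card_slice_eq_one hcard
  let φ : Module.Dual (ZMod 3) (Fin 3 → ZMod 3) := dotProductBilin (ZMod 3) (ZMod 3) w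
  obtain ⟨p, hp⟩ := card_eq_one.1 card_one
  have card_slice : #{x ∈ C | φ x = k + 1} = 4 := card_four (k + 1) (by simp)
  obtain ⟨c, a, b, slice_subset⟩ := exists_subset_parallelogram
    (hC.mono (filter_subset (φ · = k + 1) C))
    ((coplanar_setOf_dotProduct_eq hw (k + 1)).subset fun x hx ↦ (mem_filter.1 hx).2)
    (by omega)
  have slice_eq : {x ∈ C | φ x = k + 1} = parallelogram c a b :=
    eq_of_subset_of_card_le slice_subset (card_slice ▸ card_parallelogram_le c a b)
  have hφp : φ p = k := (mem_filter.1 (hp.superset (mem_singleton_self p))).2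
  obtain ⟨hφc, hφa, hφb⟩ := eq_of_forall_mem_parallelogram (by decide) (φ := φ) fun x hx ↦
    (mem_filter.1 (slice_eq.superset hx)).2
  have hφcp : φ (c - p) = 1 := by rw [map_sub, hφc, hφp, add_sub_cancel_left]
  have frame_indep : LinearIndependent (ZMod 3) ![c - p, a, b] :=
    linearIndependent_finCons_of_dual
      (linearIndependent_of_card_parallelogram (slice_eq ▸ card_slice))
      (hφcp ▸ one_ne_zero) (Fin.forall_fin_two.2 ⟨hφa, hφb⟩)
  let F : (Fin 3 → ZMod 3) ≃ᵃ[ZMod 3] (Fin 3 → ZMod 3) :=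
    AffineEquiv.ofBijective (φ := affineFrame (ZMod 3) p ![c - p, a, b])
      (Finite.injective_iff_bijective.1 (affineFrame_injective p frame_indep))
  have hF (x : Fin 3 → ZMod 3) : F x = x 0 • (c - p) + x 1 • a + x 2 • b + p := by
    simp [F, affineFrame_apply, Fin.sum_univ_three]
  refine ⟨F, inNormalPosition_preimage hp slice_eq (card_four (k - 1) (by simp)) F hF fun x ↦ ?_⟩
  simp only [hF, map_add, map_smul, hφcp, hφa, hφb, hφp, smul_eq_mul, mul_one, mul_zero, add_zero]

theorem IsCap.exists_affineEquiv_image_paraboloid {C : Finset (Fin 3 → ZMod 3)} (hC : IsCap C)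
    (hcard : 9 ≤ #C) :
    ∃ F : (Fin 3 → ZMod 3) ≃ᵃ[ZMod 3] (Fin 3 → ZMod 3), paraboloid.image F = C := by
  obtain ⟨F, hF⟩ := hC.exists_affineEquiv_inNormalPosition hcard
  have preimage_subset := hF.subset_paraboloid (hC.preimage F.toAffineMap F.injective)
  have subset_image : C ⊆ paraboloid.image F := fun x hx ↦
    mem_image.2 ⟨F.symm x, preimage_subset (by simpa using hx), F.apply_symm_apply x⟩
  refine ⟨F, (eq_of_subset_of_card_le subset_image ?_).symm⟩
  rwa [card_image_of_injective _ F.injective, card_paraboloid]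

/-- Any two maximal caps in `AG(3,3)` are affinely equivalent. -/
theorem maximal_caps_AG33_affinely_equivalent
    (C D : Finset (Fin 3 → ZMod 3)) (hC : MaximalCap C) (hD : MaximalCap D) :
    ∃ T : (Fin 3 → ZMod 3) ≃ᵃ[ZMod 3] (Fin 3 → ZMod 3),
      C.image (fun x => T x) = D := by
  have nine_le {E : Finset (Fin 3 → ZMod 3)} (hE : MaximalCap E) : 9 ≤ #E :=
    card_paraboloid ▸ hE.2 paraboloid isCap_paraboloid
  obtain ⟨F, rfl⟩ := hC.1.exists_affineEquiv_image_paraboloid (nine_le hC)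
  obtain ⟨G, rfl⟩ := hD.1.exists_affineEquiv_image_paraboloid (nine_le hD)
  refine ⟨F.symm.trans G, ?_⟩
  rw [image_image]
  exact image_congr fun x _ ↦ congrArg G (F.symm_apply_apply x)
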